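/- arXiv:1507.08173 — 2 statements merged into one kernel-verified Lean document; each statement's English description precedes it below -/
import Mathlib

section
/- Let X* = P_{k₂} C Q_{k₁}ᵀ for some C ∈ ℝ^{k₂×k₁} (i.e., X* is (k₁,k₂)-low-rank on the graphs L₁ and L₂), let E ∈ ℝ^{p×n}, and set X = X* + E. Let φ : ℝ^{p×n} → ℝ be nonnegative, convex, and even (φ(−A) = φ(A) for all A). Let γ > 0, assume λ_{k₁+1} > 0 and ω_{k₂+1} > 0, and set γ₁ = γ/λ_{k₁+1} and γ₂ = γ/ω_{k₂+1}. If U* ∈ ℝ^{p×n} is a global minimizer of U ↦ φ(U − X) + γ₁·tr(U L₁ Uᵀ) + γ₂·tr(Uᵀ L₂ U), then φ(U* − X) + γ₁·λ_{k₁+1}·‖U* Q̄_{k₁}‖_F² + γ₂·ω_{k₂+1}·‖P̄_{k₂}ᵀ U*‖_F² ≤ φ(E) + γ·‖X*‖_F²·(λ_{k₁}/λ_{k₁+1} + ω_{k₂}/ω_{k₂+1}). -/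
/-!
As `X*` competes with the minimizer `U*`, the objective at `U*` is at most
`φ(-E) + γ₁ tr(X* L₁ X*ᵀ) + γ₂ tr(X*ᵀ L₂ X*)`, and `φ(-E) = φ(E)`. In the eigenbasis `Q`, the
energy `tr(A L₁ Aᵀ)` is the sum of the `λ_j (A Q)_{ij}²`. Discarding all columns of `U* Q` but the
trailing ones bounds the energy of `U*` from below by `λ_{k₁+1} ‖U* Q̄_{k₁}‖²`. As `X* = M Q_{k₁}ᵀ`
for a matrix `M` and `Q_{k₁}` has orthonormal columns, the energy of `X*` involves only the
eigenvalues `λ_j ≤ λ_{k₁}`, so that it is at most `λ_{k₁} ‖X*‖²`. The term of `L₂` is treated in the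
same way, with transposed matrices.
-/

open Matrix BigOperators

/-- Squared Frobenius norm of a real matrix. -/
noncomputable def frobSq {m n : ℕ} (A : Matrix (Fin m) (Fin n) ℝ) : ℝ :=
  ∑ i, ∑ j, (A i j) ^ 2

section DirichletEnergy

variable {m n r R : Type*} [Fintype m] [Fintype n] [Fintype r]

/-- The Dirichlet energy `tr(A L Aᵀ)` on a graph with Laplacian `L`, which measures how much the
rows of `A`, viewed as signals on the vertices of the graph, vary along its edges. The columns of
`A` are treated by passing to `Aᵀ`. -/
def dirichletEnergy [CommSemiring R] (L : Matrix n n R) (A : Matrix m n R) : R :=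
  (A * L * Aᵀ).trace

lemma dirichletEnergy_mul [CommSemiring R] (L : Matrix r r R) (A : Matrix m n R)
    (B : Matrix n r R) : dirichletEnergy L (A * B) = dirichletEnergy (B * L * Bᵀ) A := by
  simp only [dirichletEnergy, transpose_mul, Matrix.mul_assoc]

lemma dirichletEnergy_diagonal [CommSemiring R] [DecidableEq n] (d : n → R) (A : Matrix m n R) :
    dirichletEnergy (diagonal d) A = ∑ i, ∑ j, d j * A i j ^ 2 := by
  simp only [dirichletEnergy, trace, diag_apply, mul_apply (N := Aᵀ), mul_diagonal, transpose_apply]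
  exact Finset.sum_congr rfl fun i _ ↦ Finset.sum_congr rfl fun j _ ↦ by ring

lemma dirichletEnergy_diagonal_submatrix_le [CommRing R] [LinearOrder R] [IsStrictOrderedRing R]
    [DecidableEq n] [DecidableEq r] {d : n → R} (hd : ∀ j, 0 ≤ d j) {f : r → n}
    (hf : Function.Injective f) (A : Matrix m n R) :
    dirichletEnergy (diagonal (d ∘ f)) (A.submatrix id f) ≤ dirichletEnergy (diagonal d) A := by
  simp only [dirichletEnergy_diagonal]
  gcongr with i
  calc ∑ j, d (f j) * A i (f j) ^ 2
      = ∑ j ∈ Finset.univ.map ⟨f, hf⟩, d j * A i j ^ 2 := by rw [Finset.sum_map]; rfl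
    _ ≤ ∑ j, d j * A i j ^ 2 :=
        Finset.sum_le_univ_sum_of_nonneg fun j ↦ mul_nonneg (hd j) (sq_nonneg _)

end DirichletEnergy

section Frobenius

variable {l m n : ℕ}

lemma frobSq_eq_dirichletEnergy_one (A : Matrix (Fin m) (Fin n) ℝ) :
    frobSq A = dirichletEnergy 1 A := by
  simp only [← diagonal_one, dirichletEnergy_diagonal, one_mul, frobSq]

lemma frobSq_transpose (A : Matrix (Fin m) (Fin n) ℝ) : frobSq Aᵀ = frobSq A :=
  Finset.sum_comm

lemma frobSq_mul_of_mul_transpose_eq_one (A : Matrix (Fin l) (Fin m) ℝ)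
    {B : Matrix (Fin m) (Fin n) ℝ} (hB : B * Bᵀ = 1) : frobSq (A * B) = frobSq A := by
  rw [frobSq_eq_dirichletEnergy_one, dirichletEnergy_mul, Matrix.mul_one, hB,
    frobSq_eq_dirichletEnergy_one]

lemma mul_frobSq_le_dirichletEnergy_diagonal {c : ℝ} {d : Fin n → ℝ} (hc : ∀ j, c ≤ d j)
    (A : Matrix (Fin m) (Fin n) ℝ) : c * frobSq A ≤ dirichletEnergy (diagonal d) A := by
  simp only [dirichletEnergy_diagonal, frobSq, Finset.mul_sum]
  gcongr with i _ j
  exact hc j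

lemma dirichletEnergy_diagonal_le_mul_frobSq {c : ℝ} {d : Fin n → ℝ} (hc : ∀ j, d j ≤ c)
    (A : Matrix (Fin m) (Fin n) ℝ) : dirichletEnergy (diagonal d) A ≤ c * frobSq A := by
  simp only [dirichletEnergy_diagonal, frobSq, Finset.mul_sum]
  gcongr with i _ j
  exact hc j

end Frobenius

section Eigendecomposition

variable {l m n k : ℕ} {c : ℝ} {d : Fin n → ℝ}

lemma mul_frobSq_mul_submatrix_le_dirichletEnergy (hd : ∀ j, 0 ≤ d j) {f : Fin k → Fin n}
    (hf : Function.Injective f) (hc : ∀ j, c ≤ d (f j)) (Q : Matrix (Fin m) (Fin n) ℝ)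
    (A : Matrix (Fin l) (Fin m) ℝ) :
    c * frobSq (A * Q.submatrix id f) ≤ dirichletEnergy (Q * diagonal d * Qᵀ) A :=
  calc c * frobSq (A * Q.submatrix id f)
      ≤ dirichletEnergy (diagonal (d ∘ f)) ((A * Q).submatrix id f) :=
        mul_frobSq_le_dirichletEnergy_diagonal hc _
    _ ≤ dirichletEnergy (diagonal d) (A * Q) := dirichletEnergy_diagonal_submatrix_le hd hf _
    _ = dirichletEnergy (Q * diagonal d * Qᵀ) A := dirichletEnergy_mul _ _ _

lemma dirichletEnergy_mul_transpose_submatrix_le {Q : Matrix (Fin m) (Fin n) ℝ} (hQ : Qᵀ * Q = 1)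
    {f : Fin k → Fin n} (hf : Function.Injective f) (hc : ∀ j, d (f j) ≤ c)
    (M : Matrix (Fin l) (Fin k) ℝ) :
    dirichletEnergy (Q * diagonal d * Qᵀ) (M * (Q.submatrix id f)ᵀ) ≤
      c * frobSq (M * (Q.submatrix id f)ᵀ) := by
  set V := Q.submatrix id f
  have orthonormal : Vᵀ * V = 1 :=
    calc Vᵀ * V = (Qᵀ * Q).submatrix f f := rfl
      _ = 1 := by rw [hQ, submatrix_one f hf]
  have diagonalized : Vᵀ * (Q * diagonal d * Qᵀ) * V = diagonal (d ∘ f) :=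
    calc Vᵀ * (Q * diagonal d * Qᵀ) * V
        = (Qᵀ * (Q * diagonal d * Qᵀ) * Q).submatrix f f := rfl
      _ = (Qᵀ * Q * diagonal d * (Qᵀ * Q)).submatrix f f := by simp only [Matrix.mul_assoc]
      _ = diagonal (d ∘ f) := by
        rw [hQ, Matrix.one_mul, Matrix.mul_one, submatrix_diagonal d f hf]
  calc dirichletEnergy (Q * diagonal d * Qᵀ) (M * Vᵀ)
      = dirichletEnergy (diagonal (d ∘ f)) M := by
        rw [dirichletEnergy_mul, transpose_transpose, diagonalized]
    _ ≤ c * frobSq M := dirichletEnergy_diagonal_le_mul_frobSq hc M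
    _ = c * frobSq (M * Vᵀ) := by
        rw [frobSq_mul_of_mul_transpose_eq_one M (by rwa [transpose_transpose])]

/-- The matrix `Q_k` of the first `k` columns of `Q`. -/
def leadingCols {ι α : Type*} (Q : Matrix ι (Fin n) α) (hk : k ≤ n) : Matrix ι (Fin k) α :=
  Q.submatrix id (Fin.castLE hk)

/-- The matrix `Q̄_k` of the columns of `Q` after the first `k`; as indices start from `0`, these
are the columns `k, …, n - 1`. -/
def trailingCols {ι α : Type*} (Q : Matrix ι (Fin n) α) (k : ℕ) : Matrix ι (Fin (n - k)) α :=
  Q.submatrix id fun j ↦ ⟨k + j, by omega⟩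

lemma mul_frobSq_mul_trailingCols_le_dirichletEnergy (hd : ∀ j, 0 ≤ d j) (hmono : Monotone d)
    {i : Fin n} (hi : i ≤ k) (Q : Matrix (Fin m) (Fin n) ℝ) (A : Matrix (Fin l) (Fin m) ℝ) :
    d i * frobSq (A * trailingCols Q k) ≤ dirichletEnergy (Q * diagonal d * Qᵀ) A := by
  refine mul_frobSq_mul_submatrix_le_dirichletEnergy hd (fun a b hab ↦ ?_) (fun j ↦ hmono ?_) Q A
  · exact Fin.ext (Nat.add_left_cancel (Fin.mk.inj hab))
  · exact Fin.le_def.2 (hi.trans (Nat.le_add_right k j))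

lemma dirichletEnergy_mul_transpose_leadingCols_le {Q : Matrix (Fin m) (Fin n) ℝ} (hQ : Qᵀ * Q = 1)
    (hmono : Monotone d) (hk : k ≤ n) {i : Fin n} (hi : k ≤ i + 1) (M : Matrix (Fin l) (Fin k) ℝ) :
    dirichletEnergy (Q * diagonal d * Qᵀ) (M * (leadingCols Q hk)ᵀ) ≤
      d i * frobSq (M * (leadingCols Q hk)ᵀ) :=
  dirichletEnergy_mul_transpose_submatrix_le hQ (Fin.castLE_injective hk)
    (fun j ↦ hmono (Nat.le_of_lt_succ (j.isLt.trans_le hi))) M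

end Eigendecomposition

theorem frpcag_bound_general {p n k₁ k₂ : ℕ} (hk₁ : k₁ < n) (hk₂ : k₂ < p)
    {L₁ Q : Matrix (Fin n) (Fin n) ℝ} {lam : Fin n → ℝ} (hQ : Qᵀ * Q = 1)
    (hlam_nonneg : ∀ i, 0 ≤ lam i) (hlam_mono : Monotone lam) (hL₁ : L₁ = Q * diagonal lam * Qᵀ)
    {L₂ P : Matrix (Fin p) (Fin p) ℝ} {om : Fin p → ℝ} (hP : Pᵀ * P = 1)
    (hom_nonneg : ∀ i, 0 ≤ om i) (hom_mono : Monotone om) (hL₂ : L₂ = P * diagonal om * Pᵀ)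
    {C : Matrix (Fin k₂) (Fin k₁) ℝ} {Xstar : Matrix (Fin p) (Fin n) ℝ}
    (hXstar : Xstar = leadingCols P hk₂.le * C * (leadingCols Q hk₁.le)ᵀ)
    {X : Matrix (Fin p) (Fin n) ℝ} {φ : Matrix (Fin p) (Fin n) ℝ → ℝ}
    {γ₁ γ₂ : ℝ} (hγ₁ : 0 ≤ γ₁) (hγ₂ : 0 ≤ γ₂) {U : Matrix (Fin p) (Fin n) ℝ}
    (hU : φ (U - X) + γ₁ * dirichletEnergy L₁ U + γ₂ * dirichletEnergy L₂ Uᵀ ≤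
      φ (Xstar - X) + γ₁ * dirichletEnergy L₁ Xstar + γ₂ * dirichletEnergy L₂ Xstarᵀ) :
    φ (U - X) + γ₁ * lam ⟨k₁, hk₁⟩ * frobSq (U * trailingCols Q k₁) +
        γ₂ * om ⟨k₂, hk₂⟩ * frobSq ((trailingCols P k₂)ᵀ * U) ≤
      φ (Xstar - X) + frobSq Xstar *
        (γ₁ * lam ⟨k₁ - 1, by omega⟩ + γ₂ * om ⟨k₂ - 1, by omega⟩) := by
  have hXstar_transpose :
      Xstarᵀ = leadingCols Q hk₁.le * Cᵀ * (leadingCols P hk₂.le)ᵀ := by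
    rw [hXstar, transpose_mul, transpose_mul, transpose_transpose, Matrix.mul_assoc]
  have lower₁ : lam ⟨k₁, hk₁⟩ * frobSq (U * trailingCols Q k₁) ≤ dirichletEnergy L₁ U :=
    hL₁ ▸ mul_frobSq_mul_trailingCols_le_dirichletEnergy hlam_nonneg hlam_mono le_rfl Q U
  have lower₂ : om ⟨k₂, hk₂⟩ * frobSq ((trailingCols P k₂)ᵀ * U) ≤ dirichletEnergy L₂ Uᵀ := by
    rw [← frobSq_transpose, transpose_mul, transpose_transpose, hL₂]
    exact mul_frobSq_mul_trailingCols_le_dirichletEnergy hom_nonneg hom_mono le_rfl P Uᵀ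
  have upper₁ : dirichletEnergy L₁ Xstar ≤ lam ⟨k₁ - 1, by omega⟩ * frobSq Xstar := by
    rw [hL₁, hXstar]
    exact dirichletEnergy_mul_transpose_leadingCols_le hQ hlam_mono hk₁.le le_tsub_add _
  have upper₂ : dirichletEnergy L₂ Xstarᵀ ≤ om ⟨k₂ - 1, by omega⟩ * frobSq Xstar := by
    rw [← frobSq_transpose Xstar, hL₂, hXstar_transpose]
    exact dirichletEnergy_mul_transpose_leadingCols_le hP hom_mono hk₂.le le_tsub_add _
  linear_combination hU + γ₁ * lower₁ + γ₂ * lower₂ + γ₁ * upper₁ + γ₂ * upper₂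

theorem frpcag_bound {p n k₁ k₂ : ℕ}
    (hk₁1 : 1 ≤ k₁) (hk₁n : k₁ < n) (hk₂1 : 1 ≤ k₂) (hk₂p : k₂ < p)
    -- eigendecomposition of the sample graph Laplacian L₁ = Q Λ Qᵀ
    (L₁ : Matrix (Fin n) (Fin n) ℝ) (Q : Matrix (Fin n) (Fin n) ℝ) (lam : Fin n → ℝ)
    (hQ₁ : Qᵀ * Q = 1) (hQ₂ : Q * Qᵀ = 1)
    (hlam_nonneg : ∀ i, 0 ≤ lam i) (hlam_mono : Monotone lam)
    (hL₁ : L₁ = Q * Matrix.diagonal lam * Qᵀ)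
    -- eigendecomposition of the feature graph Laplacian L₂ = P Ω Pᵀ
    (L₂ : Matrix (Fin p) (Fin p) ℝ) (P : Matrix (Fin p) (Fin p) ℝ) (om : Fin p → ℝ)
    (hP₁ : Pᵀ * P = 1) (hP₂ : P * Pᵀ = 1)
    (hom_nonneg : ∀ i, 0 ≤ om i) (hom_mono : Monotone om)
    (hL₂ : L₂ = P * Matrix.diagonal om * Pᵀ)
    -- the (k₁,k₂)-low-rank matrix X* = P_{k₂} C Q_{k₁}ᵀ, the noise E and the data X
    (C : Matrix (Fin k₂) (Fin k₁) ℝ)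
    (Xstar : Matrix (Fin p) (Fin n) ℝ)
    (hXstar : Xstar = (Matrix.of fun (i : Fin p) (j : Fin k₂) => P i ⟨j, by omega⟩) * C *
      (Matrix.of fun (i : Fin n) (j : Fin k₁) => Q i ⟨j, by omega⟩)ᵀ)
    (E X : Matrix (Fin p) (Fin n) ℝ) (hX : X = Xstar + E)
    -- the loss function φ
    (φ : Matrix (Fin p) (Fin n) ℝ → ℝ)
    (hφ_nonneg : ∀ A, 0 ≤ φ A) (hφ_convex : ConvexOn ℝ Set.univ φ)
    (hφ_even : ∀ A, φ (-A) = φ A)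
    -- the regularization parameters
    (γ γ₁ γ₂ : ℝ) (hγ : 0 < γ)
    (hlam_pos : 0 < lam ⟨k₁, hk₁n⟩) (hom_pos : 0 < om ⟨k₂, hk₂p⟩)
    (hγ₁ : γ₁ = γ / lam ⟨k₁, hk₁n⟩) (hγ₂ : γ₂ = γ / om ⟨k₂, hk₂p⟩)
    -- U* is a global minimizer of the FRPCAG objective
    (Ustar : Matrix (Fin p) (Fin n) ℝ)
    (hUstar : ∀ U : Matrix (Fin p) (Fin n) ℝ,
      φ (Ustar - X) + γ₁ * Matrix.trace (Ustar * L₁ * Ustarᵀ) +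
          γ₂ * Matrix.trace (Ustarᵀ * L₂ * Ustar) ≤
        φ (U - X) + γ₁ * Matrix.trace (U * L₁ * Uᵀ) +
          γ₂ * Matrix.trace (Uᵀ * L₂ * U)) :
    φ (Ustar - X) +
      γ₁ * lam ⟨k₁, hk₁n⟩ *
        frobSq (Ustar * Matrix.of fun (i : Fin n) (j : Fin (n - k₁)) => Q i ⟨k₁ + j, by omega⟩) +
      γ₂ * om ⟨k₂, hk₂p⟩ *
        frobSq ((Matrix.of fun (i : Fin p) (j : Fin (p - k₂)) => P i ⟨k₂ + j, by omega⟩)ᵀ * Ustar)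
    ≤ φ E + γ * frobSq Xstar *
        (lam ⟨k₁ - 1, by omega⟩ / lam ⟨k₁, hk₁n⟩ +
          om ⟨k₂ - 1, by omega⟩ / om ⟨k₂, hk₂p⟩) := by
  have hE : φ (Xstar - X) = φ E := by rw [hX, sub_add_cancel_left, hφ_even]
  have hγ₁_nonneg : 0 ≤ γ₁ := hγ₁ ▸ (div_pos hγ hlam_pos).le
  have hγ₂_nonneg : 0 ≤ γ₂ := hγ₂ ▸ (div_pos hγ hom_pos).le
  exact (frpcag_bound_general hk₁n hk₂p hQ₁ hlam_nonneg hlam_mono hL₁ hP₁ hom_nonneg hom_mono hL₂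
    hXstar hγ₁_nonneg hγ₂_nonneg (hUstar Xstar)).trans_eq (by rw [hE, hγ₁, hγ₂]; ring)
end

section
/- Let L ∈ ℝ^{n×n} be symmetric with eigendecomposition L = QΛQᵀ, where Q is orthogonal and Λ is diagonal with nonnegative diagonal entries λ₁ ≤ … ≤ λ_n in nondecreasing order. Then for every U ∈ ℝ^{p×n} and every 1 ≤ k < n, tr(U L Uᵀ) ≥ λ_{k+1} · ‖U Q̄_k‖_F², where Q̄_k denotes the matrix of the last n−k columns of Q. -/
/-! Put `V = U * Q`. Then `tr (U L Uᵀ) = tr (V Λ Vᵀ) = ∑ᵢ ∑ⱼ λⱼ Vᵢⱼ²`. The columns with `j < k`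
(indices from `0`) contribute nonnegative terms, and on the others `λⱼ ≥ λₖ`. -/

open Matrix BigOperators

theorem trace_mul_diagonal_mul_transpose {R m n : Type*} [CommSemiring R] [Fintype m] [Fintype n]
    [DecidableEq n] (V : Matrix m n R) (d : n → R) :
    trace (V * diagonal d * Vᵀ) = ∑ i, ∑ j, d j * V i j ^ 2 := by
  simp only [trace, diag_apply, mul_apply (N := Vᵀ), mul_diagonal, transpose_apply]
  refine Finset.sum_congr rfl fun i _ => Finset.sum_congr rfl fun j _ => ?_
  ring

theorem mul_sum_comp_le_sum_mul {R ι κ : Type*} [Semiring R] [PartialOrder R] [IsOrderedRing R]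
    [Fintype ι] [Fintype κ] {w x : ι → R} {c : R} (e : κ ↪ ι) (hx : 0 ≤ x)
    (hc : ∀ i ∈ Set.range e, c ≤ w i) (hw : ∀ i ∉ Set.range e, 0 ≤ w i) :
    c * ∑ j, x (e j) ≤ ∑ i, w i * x i := by
  calc c * ∑ j, x (e j) = ∑ j, c * x (e j) := Finset.mul_sum ..
    _ ≤ ∑ j, w (e j) * x (e j) :=
      Finset.sum_le_sum fun j _ => mul_le_mul_of_nonneg_right (hc _ ⟨j, rfl⟩) (hx (e j))
    _ = ∑ i ∈ Finset.univ.map e, w i * x i := (Finset.sum_map _ e fun i => w i * x i).symm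
    _ ≤ ∑ i, w i * x i :=
      Finset.sum_le_sum_of_subset_of_nonneg (Finset.subset_univ _) fun i _ hi =>
        mul_nonneg (hw i (by simpa using hi)) (hx i)

theorem mul_sum_sq_submatrix_le_trace {R m n κ : Type*} [CommRing R] [LinearOrder R]
    [IsOrderedRing R] [Fintype m] [Fintype n] [DecidableEq n] [Fintype κ] {d : n → R} {c : R}
    (V : Matrix m n R) (e : κ ↪ n) (hc : ∀ j ∈ Set.range e, c ≤ d j)
    (hd : ∀ j ∉ Set.range e, 0 ≤ d j) :
    c * ∑ i, ∑ j, V.submatrix id e i j ^ 2 ≤ trace (V * diagonal d * Vᵀ) := by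
  rw [trace_mul_diagonal_mul_transpose, Finset.mul_sum]
  exact Finset.sum_le_sum fun i _ =>
    mul_sum_comp_le_sum_mul (x := fun j => V i j ^ 2) e (fun j => sq_nonneg (V i j)) hc hd

/-- The inclusion of the indices `k, …, n - 1` into `Fin n`. The columns of `Q` that it selects,
`Q.submatrix id (lastIndices k)`, form the matrix `Q̄ₖ`. -/
def lastIndices {n : ℕ} (k : Fin n) : Fin (n - k) ↪ Fin n :=
  (Fin.natAddEmb k).trans (finCongr (Nat.add_sub_of_le k.isLt.le)).toEmbedding

theorem range_lastIndices {n : ℕ} (k : Fin n) : Set.range (lastIndices k) = Set.Ici k := by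
  refine Set.Subset.antisymm (Set.range_subset_iff.2 fun j => Nat.le_add_right k j) fun i hki => ?_
  exact ⟨⟨i - k, Nat.sub_lt_sub_right hki i.isLt⟩, Fin.ext (Nat.add_sub_of_le hki)⟩

theorem trace_lower_bound_sample_graph_general {ι : Type*} [Fintype ι] {p n : ℕ}
    (L : Matrix ι ι ℝ) (Q : Matrix ι (Fin n) ℝ) (lam : Fin n → ℝ)
    (hL : L = Q * diagonal lam * Qᵀ) (U : Matrix (Fin p) ι ℝ) (k : Fin n)
    (hlam_nonneg : ∀ i < k, 0 ≤ lam i) (hlam_ge : ∀ i ≥ k, lam k ≤ lam i) :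
    lam k * frobSq (U * Q.submatrix id (lastIndices k)) ≤ trace (U * L * Uᵀ) := by
  have trace_eq : trace (U * L * Uᵀ) = trace (U * Q * diagonal lam * (U * Q)ᵀ) := by
    simp only [hL, transpose_mul, Matrix.mul_assoc]
  rw [trace_eq]
  refine mul_sum_sq_submatrix_le_trace (U * Q) (lastIndices k) ?_ ?_
  · simpa only [range_lastIndices, Set.mem_Ici] using hlam_ge
  · simpa only [range_lastIndices, Set.mem_Ici, not_le] using hlam_nonneg

theorem trace_lower_bound_sample_graph {p n : ℕ}
    (L : Matrix (Fin n) (Fin n) ℝ) (Q : Matrix (Fin n) (Fin n) ℝ) (lam : Fin n → ℝ)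
    (hQ₁ : Qᵀ * Q = 1) (hQ₂ : Q * Qᵀ = 1)
    (hlam_nonneg : ∀ i, 0 ≤ lam i) (hlam_mono : Monotone lam)
    (hL : L = Q * Matrix.diagonal lam * Qᵀ)
    (U : Matrix (Fin p) (Fin n) ℝ) (k : ℕ) (hk1 : 1 ≤ k) (hkn : k < n) :
    lam ⟨k, hkn⟩ *
      frobSq (U * Matrix.of fun (i : Fin n) (j : Fin (n - k)) => Q i ⟨k + j, by omega⟩)
      ≤ Matrix.trace (U * L * Uᵀ) :=
  trace_lower_bound_sample_graph_general L Q lam hL U ⟨k, hkn⟩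
    (fun i _ => hlam_nonneg i) (fun _ hki => hlam_mono hki)
end
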